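/- Let $k$ be a field of characteristic zero, $d \ge 2$, and suppose that in $k[T,X_1,\dots,X_{d+1}]$ we have an identity $0 = P(X_1,\dots,X_{d+1}) + a\,h_{m}(X_1,\dots,X_{d+1})$ where $a \in k$, $m \ge 1$, $h_m$ denotes the complete homogeneous symmetric polynomial of degree $m$, and $P$ is a product of at least two non-constant homogeneous polynomials. Then $a = 0$. -/

import Mathlib

open MvPolynomial

namespace HsymmAux

/-- The complete homogeneous sum evaluated at a tuple. -/
noncomputable def S {R : Type*} [CommRing R] (n : ℕ) (x : Fin n → R) (m : ℕ) : R :=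
  ∑ b ∈ Finset.Nat.antidiagonalTuple n m, ∏ j, x j ^ b j

lemma S_succ {R : Type*} [CommRing R] (n : ℕ) (x : Fin (n + 1) → R) (m : ℕ) :
    S (n + 1) x m = ∑ p ∈ Finset.HasAntidiagonal.antidiagonal m, x 0 ^ p.1 * S n (fun i => x i.succ) p.2 := by
  classical
  unfold S
  have key : Finset.Nat.antidiagonalTuple (n + 1) m =
      (Finset.HasAntidiagonal.antidiagonal m).biUnion fun p =>
        (Finset.Nat.antidiagonalTuple n p.2).image (fun t => (Fin.cons p.1 t : Fin (n+1) → ℕ)) := by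
    ext b
    simp only [Finset.Nat.mem_antidiagonalTuple, Finset.mem_biUnion, Finset.mem_image,
      Finset.HasAntidiagonal.mem_antidiagonal]
    constructor
    · intro h
      refine ⟨(b 0, ∑ i, b (Fin.succ i)), ?_, fun i => b i.succ, rfl, ?_⟩
      · rw [← h, Fin.sum_univ_succ]
      · exact Fin.cons_self_tail b
    · rintro ⟨p, hp, t, ht, rfl⟩
      rw [Fin.sum_univ_succ]
      simp [ht, hp]
  rw [key, Finset.sum_biUnion]
  · refine Finset.sum_congr rfl fun p _ => ?_
    rw [Finset.sum_image]
    · simp [Fin.prod_univ_succ, Finset.mul_sum]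
    · intro s _ t _ h
      exact Fin.cons_right_injective (α := fun _ => ℕ) p.1 h
  · intro p hp q hq hpq
    rw [Function.onFun, Finset.disjoint_left]
    intro b hb hb'
    simp only [Finset.mem_image, Finset.Nat.mem_antidiagonalTuple] at hb hb'
    obtain ⟨s, hs, rfl⟩ := hb
    obtain ⟨t, ht, h⟩ := hb'
    have h0 := congrFun h 0
    have hp' := Finset.HasAntidiagonal.mem_antidiagonal.1 hp
    have hq' := Finset.HasAntidiagonal.mem_antidiagonal.1 hq
    simp only [Fin.cons_zero] at h0
    apply hpq
    ext <;> omega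

lemma S_rec {R : Type*} [CommRing R] (n : ℕ) (x : Fin (n + 1) → R) (m : ℕ) :
    S (n + 1) x (m + 1) = S n (fun i => x i.succ) (m + 1) + x 0 * S (n + 1) x m := by
  rw [S_succ, S_succ, Finset.Nat.sum_antidiagonal_succ, Finset.mul_sum]
  simp [pow_succ', mul_assoc]

lemma S_zero_right {R : Type*} [CommRing R] (n : ℕ) (x : Fin n → R) : S n x 0 = 1 := by
  simp [S, Finset.Nat.antidiagonalTuple_zero_right]

lemma S_zero {R : Type*} [CommRing R] (n : ℕ) (x : Fin n → R) (hx : ∀ i, x i = 0) (m : ℕ) :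
    S n x (m + 1) = 0 := by
  induction n with
  | zero => simp [S]
  | succ n ih => rw [S_rec, ih _ (fun i => hx _), hx]; simp

lemma S_three {R : Type*} [CommRing R] (e : ℕ) (x : Fin (e + 3) → R)
    (hx : ∀ i : Fin e, x i.succ.succ.succ = 0) (m : ℕ) :
    (x 0 - x 1) * (x 0 - x 2) * (x 1 - x 2) * S (e + 3) x m =
      x 0 ^ (m + 2) * (x 1 - x 2) - x 1 ^ (m + 2) * (x 0 - x 2) + x 2 ^ (m + 2) * (x 0 - x 1) := by
  have h1 : ∀ m, S (e + 1) (fun i => x i.succ.succ) m = x 2 ^ m := by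
    intro m
    induction m with
    | zero => simp [S_zero_right]
    | succ m ih => rw [S_rec, S_zero _ _ hx, ih, pow_succ']; simp
  have h2 : ∀ m, (x 1 - x 2) * S (e + 2) (fun i => x i.succ) m = x 1 ^ (m + 1) - x 2 ^ (m + 1) := by
    intro m
    induction m with
    | zero => simp [S_zero_right]
    | succ m ih =>
      rw [S_rec, h1, mul_add]
      have : x (Fin.succ 0) = x 1 := rfl
      rw [this]
      linear_combination x 1 * ih
  induction m with
  | zero => rw [S_zero_right]; ring
  | succ m ih =>
    rw [S_rec]
    linear_combination x 0 * ih + (x 0 - x 1) * (x 0 - x 2) * h2 (m + 1)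

lemma deriv_facts {k : Type*} [Field k] (i j l : Fin 3) (hij : i ≠ j) (hil : i ≠ l) (hjl : j ≠ l)
    (m : ℕ) (h : MvPolynomial (Fin 3) k)
    (H : (X i - X j) * (X i - X l) * (X j - X l) * h =
      X i ^ (m + 2) * (X j - X l) - X j ^ (m + 2) * (X i - X l) + X l ^ (m + 2) * (X i - X j)) :
    (((m : MvPolynomial (Fin 3) k) + 2) * X i ^ (m + 1) * (X j - X l) - X j ^ (m + 2) + X l ^ (m + 2) =
      (X i - X j) * (X i - X l) * (X j - X l) * pderiv i h +
      (2 * X i - X j - X l) * (X j - X l) * h) ∧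
    (((m : MvPolynomial (Fin 3) k) + 2) * ((m : MvPolynomial (Fin 3) k) + 1) * X i ^ m =
      (X i - X j) * (X i - X l) * pderiv i (pderiv i h) +
      2 * (2 * X i - X j - X l) * pderiv i h + 2 * h) := by
  have H1 : (((m : MvPolynomial (Fin 3) k) + 2) * X i ^ (m + 1) * (X j - X l) - X j ^ (m + 2) + X l ^ (m + 2) =
      (X i - X j) * (X i - X l) * (X j - X l) * pderiv i h +
      (2 * X i - X j - X l) * (X j - X l) * h) := by
    have := congrArg (pderiv i) H
    simp [Derivation.leibniz, Derivation.leibniz_pow, pderiv_X_self, pderiv_X_of_ne hij.symm,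
      pderiv_X_of_ne hil.symm] at this
    linear_combination -this
  refine ⟨H1, ?_⟩
  have H2 := congrArg (pderiv i) H1
  have c2 : pderiv i (2 : MvPolynomial (Fin 3) k) = 0 := by
    exact_mod_cast (pderiv i).map_natCast (2 : ℕ)
  have hne : (X j - X l : MvPolynomial (Fin 3) k) ≠ 0 := by
    rw [sub_ne_zero]
    exact fun h => hjl (X_injective h)
  apply mul_left_cancel₀ hne
  simp [Derivation.leibniz, Derivation.leibniz_pow, pderiv_X_self, pderiv_X_of_ne hij.symm,
      pderiv_X_of_ne hil.symm, c2] at H2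
  linear_combination H2

lemma pointwise {K : Type*} [Field K] [CharZero K] (m : ℕ) (hm : 1 ≤ m) (x y z : K)
    (u v w : K)
    (Ax : ((m : K) + 2) * (m + 1) * x ^ m = (x - y) * (x - z) * u)
    (Ay : ((m : K) + 2) * (m + 1) * y ^ m = (y - x) * (y - z) * v)
    (Az : ((m : K) + 2) * (m + 1) * z ^ m = (z - x) * (z - y) * w)
    (Bx : ((m : K) + 2) * x ^ (m + 1) * (y - z) = y ^ (m + 2) - z ^ (m + 2))
    (By : ((m : K) + 2) * y ^ (m + 1) * (x - z) = x ^ (m + 2) - z ^ (m + 2))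
    (Bz : ((m : K) + 2) * z ^ (m + 1) * (x - y) = x ^ (m + 2) - y ^ (m + 2))
    (N : x ^ (m + 2) * (y - z) - y ^ (m + 2) * (x - z) + z ^ (m + 2) * (x - y) = 0) :
    x = 0 ∧ y = 0 ∧ z = 0 := by
  have c2 : (m : K) + 2 ≠ 0 := by exact_mod_cast (by omega : m + 2 ≠ 0)
  have c1 : (m : K) + 1 ≠ 0 := by exact_mod_cast (by omega : m + 1 ≠ 0)
  have hz : ∀ t : K, ((m : K) + 2) * (m + 1) * t ^ m = 0 → t = 0 := by
    intro t ht
    simpa [c1, c2, show m ≠ 0 by omega] using ht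
  by_cases hxy : x = y
  · have hx := hz x (by rw [Ax, hxy]; ring)
    have hy : y = 0 := hxy ▸ hx
    refine ⟨hx, hy, ?_⟩
    rw [hx, hy] at Bx
    simpa using Bx.symm
  by_cases hxz : x = z
  · have hx := hz x (by rw [Ax, hxz]; ring)
    have hy : z = 0 := hxz ▸ hx
    refine ⟨hx, ?_, hy⟩
    rw [hx, hy] at Bx
    simpa using Bx.symm
  by_cases hyz : y = z
  · have hx := hz y (by rw [Ay, hyz]; ring)
    have hy : z = 0 := hyz ▸ hx
    refine ⟨?_, hx, hy⟩
    rw [hx, hy] at By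
    simpa using By.symm
  exfalso
  have sxy := sub_ne_zero.2 hxy
  have sxz := sub_ne_zero.2 hxz
  have syz := sub_ne_zero.2 hyz
  -- common tangent slope
  have e1 : x ^ (m + 1) = y ^ (m + 1) := by
    have : ((m : K) + 2) * (y - z) * (x - z) * (x ^ (m + 1) - y ^ (m + 1)) = 0 := by
      linear_combination (x - z) * Bx - (y - z) * By - N
    simpa [c2, sxz, syz, sub_eq_zero] using this
  have e2 : x ^ (m + 1) = z ^ (m + 1) := by
    have : ((m : K) + 2) * (y - z) * (x - y) * (x ^ (m + 1) - z ^ (m + 1)) = 0 := by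
      linear_combination (x - y) * Bx - (y - z) * Bz - N
    simpa [c2, sxy, syz, sub_eq_zero] using this
  have e3 : ((m : K) + 1) * (x - y) * x ^ (m + 1) = 0 := by
    linear_combination Bz + ((m : K) + 2) * (x - y) * e2 + y * e1
  have hx : x = 0 := by simpa [c1, sxy] using e3
  have hy : y = 0 := by
    rw [hx] at e1
    simpa using e1.symm
  exact hxy (hx.trans hy.symm)

lemma height_ge {k : Type*} [Field k] (p : Ideal (MvPolynomial (Fin 3) k)) [p.IsPrime]
    (h0 : X 0 ∈ p) (h1 : X 1 ∈ p) (h2 : X 2 ∈ p) : 3 ≤ p.height := by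
  let f1 : MvPolynomial (Fin 3) k →ₐ[k] MvPolynomial (Fin 3) k := aeval ![0, X 1, X 2]
  let f2 : MvPolynomial (Fin 3) k →ₐ[k] MvPolynomial (Fin 3) k := aeval ![0, 0, X 2]
  let q1 := RingHom.ker f1
  let q2 := RingHom.ker f2
  have : q1.IsPrime := RingHom.ker_isPrime f1
  have : q2.IsPrime := RingHom.ker_isPrime f2
  have a1 : (⊥ : Ideal (MvPolynomial (Fin 3) k)) < q1 := by
    rw [bot_lt_iff_ne_bot]
    intro h
    have : (X 0 : MvPolynomial (Fin 3) k) ∈ q1 := by simp [q1, f1, RingHom.mem_ker]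
    rw [h] at this
    exact X_ne_zero _ this
  have a2 : q1 < q2 := by
    refine lt_of_le_of_ne ?_ ?_
    · intro t ht
      have : f2.comp f1 = f2 := by
        ext i
        fin_cases i <;> simp [f1, f2]
      rw [RingHom.mem_ker] at ht ⊢
      rw [← this, AlgHom.comp_apply, ht, map_zero]
    · intro h
      have : (X 1 : MvPolynomial (Fin 3) k) ∈ q2 := by simp [q2, f2, RingHom.mem_ker]
      rw [← h] at this
      simp [q1, f1, RingHom.mem_ker] at this
  have a3 : q2 < p := by
    refine lt_of_le_of_ne ?_ ?_
    · intro t ht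
      have : (Ideal.Quotient.mkₐ k p).comp f2 = Ideal.Quotient.mkₐ k p := by
        ext i
        fin_cases i
        · simpa [f2] using (Ideal.Quotient.eq_zero_iff_mem.2 h0).symm
        · simpa [f2] using (Ideal.Quotient.eq_zero_iff_mem.2 h1).symm
        · simp [f2]
      rw [RingHom.mem_ker] at ht
      have h := DFunLike.congr_fun this t
      rw [AlgHom.comp_apply, ht, map_zero] at h
      exact Ideal.Quotient.eq_zero_iff_mem.1 h.symm
    · intro h
      rw [← h] at h2
      simp [q2, f2, RingHom.mem_ker] at h2
  have b1 := Ideal.height_add_one_le_of_lt_of_isPrime a1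
  have b2 := Ideal.height_add_one_le_of_lt_of_isPrime a2
  have b3 := Ideal.height_add_one_le_of_lt_of_isPrime a3
  calc (3 : ℕ∞) = 0 + 1 + 1 + 1 := by norm_num
    _ ≤ (⊥ : Ideal (MvPolynomial (Fin 3) k)).height + 1 + 1 + 1 := by gcongr; exact zero_le
    _ ≤ q1.height + 1 + 1 := by gcongr
    _ ≤ q2.height + 1 := by gcongr
    _ ≤ p.height := b3

lemma no_factor {k : Type*} [Field k] [CharZero k] (m : ℕ) (hm : 1 ≤ m)
    (h F G : MvPolynomial (Fin 3) k) (hFG : h = F * G)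
    (hF : constantCoeff F = 0) (hG : constantCoeff G = 0)
    (H : (X 0 - X 1) * (X 0 - X 2) * (X 1 - X 2) * h =
      X 0 ^ (m + 2) * (X 1 - X 2) - X 1 ^ (m + 2) * (X 0 - X 2) + X 2 ^ (m + 2) * (X 0 - X 1)) :
    False := by
  let M : Ideal (MvPolynomial (Fin 3) k) := RingHom.ker (constantCoeff (R := k) (σ := Fin 3))
  have : M.IsPrime := RingHom.ker_isPrime _
  have hI : Ideal.span {F, G} ≤ M := by
    rw [Ideal.span_le]
    rintro t (rfl | rfl)
    · exact hF
    · exact hG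
  obtain ⟨p, hp, hpM⟩ := Ideal.exists_minimalPrimes_le hI
  have : p.IsPrime := hp.isPrime
  have hFp : F ∈ p := hp.1.2 (Ideal.subset_span (by simp))
  have hGp : G ∈ p := hp.1.2 (Ideal.subset_span (by simp))
  have hht : p.height ≤ 2 := by
    classical
    have hp' : p ∈ (Ideal.span (({F, G} : Finset (MvPolynomial (Fin 3) k)) :
        Set (MvPolynomial (Fin 3) k))).minimalPrimes := by simpa using hp
    refine (Ideal.height_le_card_of_mem_minimalPrimes_span_finset hp').trans ?_
    exact_mod_cast Finset.card_le_two
  let R := MvPolynomial (Fin 3) k ⧸ p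
  let K := FractionRing R
  let φ : MvPolynomial (Fin 3) k →+* K := (algebraMap R K).comp (Ideal.Quotient.mk p)
  have hφ : ∀ t, φ t = 0 ↔ t ∈ p := by
    intro t
    rw [RingHom.comp_apply, map_eq_zero_iff _ (IsFractionRing.injective R K),
      Ideal.Quotient.eq_zero_iff_mem]
  have : CharZero K := charZero_of_injective_ringHom (φ.comp C).injective
  have hh : φ h = 0 := by rw [hφ, hFG]; exact p.mul_mem_right _ hFp
  have hd : ∀ i, φ (pderiv i h) = 0 := by
    intro i
    rw [hφ, hFG, Derivation.leibniz]
    exact p.add_mem (p.mul_mem_right _ hFp) (p.mul_mem_right _ hGp)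
  obtain ⟨B0, A0⟩ := deriv_facts 0 1 2 (by decide) (by decide) (by decide) m h H
  obtain ⟨B1, A1⟩ := deriv_facts 1 0 2 (by decide) (by decide) (by decide) m h
    (by linear_combination -H)
  obtain ⟨B2, A2⟩ := deriv_facts 2 0 1 (by decide) (by decide) (by decide) m h
    (by linear_combination H)
  replace B0 := congrArg φ B0
  replace B1 := congrArg φ B1
  replace B2 := congrArg φ B2
  replace A0 := congrArg φ A0
  replace A1 := congrArg φ A1
  replace A2 := congrArg φ A2
  have N := congrArg φ H
  simp only [map_add, map_sub, map_mul, map_pow, map_natCast, map_ofNat, map_one, hh, hd, mul_zero,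
    add_zero] at A0 A1 A2 B0 B1 B2 N
  obtain ⟨x0, x1, x2⟩ := pointwise m hm (φ (X 0)) (φ (X 1)) (φ (X 2)) _ _ _ A0 A1 A2
    (by linear_combination B0) (by linear_combination B1) (by linear_combination B2) N.symm
  have := height_ge p ((hφ _).1 x0) ((hφ _).1 x1) ((hφ _).1 x2)
  exact absurd (this.trans hht) (by decide)

end HsymmAux



/-- Let `k` be a field of characteristic zero and `d ≥ 2`. If in `k[T, X₁, …, X_{d+1}]`
we have `0 = P + a·h_m(X₁, …, X_{d+1})` where `m ≥ 1`, `h_m` is the complete homogeneous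
symmetric polynomial of degree `m`, and `P` is a product of at least two non-constant
homogeneous polynomials, then `a = 0`. -/
theorem eq_zero_of_product_plus_hsymm {k : Type*} [Field k] [CharZero k]
    (d m : ℕ) (hd : 2 ≤ d) (hm : 1 ≤ m) (a : k)
    (l : ℕ) (hl : 2 ≤ l) (P : Fin l → MvPolynomial (Unit ⊕ Fin (d + 1)) k)
    (hP : ∀ i, ∃ n, 1 ≤ n ∧ (P i).IsHomogeneous n)
    (heq : (0 : MvPolynomial (Unit ⊕ Fin (d + 1)) k) =
      (∏ i, P i) + C a * ∑ b ∈ Finset.Nat.antidiagonalTuple (d + 1) m,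
        ∏ j, X (Sum.inr j) ^ b j) :
    a = 0 := by
  classical
  by_contra ha
  obtain ⟨e, rfl⟩ : ∃ e, d = e + 2 := ⟨d - 2, by omega⟩
  obtain ⟨r, rfl⟩ : ∃ r, l = r + 2 := ⟨l - 2, by omega⟩
  let x : Fin (e + 3) → MvPolynomial (Fin 3) k :=
    fun j => if hj : j.1 < 3 then X ⟨j.1, hj⟩ else 0
  let ψ : MvPolynomial (Unit ⊕ Fin (e + 2 + 1)) k →ₐ[k] MvPolynomial (Fin 3) k :=
    aeval (Sum.elim (fun _ => 0) x)
  have hψ : ∀ q, constantCoeff (ψ q) = constantCoeff q := by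
    intro q
    have : (constantCoeff (R := k) (σ := Fin 3)).comp ψ.toRingHom = constantCoeff := by
      apply MvPolynomial.ringHom_ext
      · intro c
        simp [ψ]
      · rintro (i | i)
        · simp [ψ]
        · by_cases hj : i.1 < 3 <;> simp [ψ, x, hj]
    exact DFunLike.congr_fun this q
  have hc : ∀ i, constantCoeff (ψ (P i)) = 0 := by
    intro i
    rw [hψ]
    obtain ⟨n, hn, hh⟩ := hP i
    rw [constantCoeff_eq]
    exact hh.coeff_eq_zero (by simp; omega)
  have e1 := congrArg ψ heq
  have hS : ψ (∑ b ∈ Finset.Nat.antidiagonalTuple (e + 2 + 1) m,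
        ∏ j, X (Sum.inr j) ^ b j) = HsymmAux.S (e + 3) x m := by
    simp [HsymmAux.S, ψ, map_sum, map_prod]
  rw [map_add, map_mul, hS, map_zero, Fin.prod_univ_succ, map_mul, Fin.prod_univ_succ, map_mul] at e1
  have hCa : ψ (C a) = C a := by simp [ψ]
  rw [hCa] at e1
  have hinv : (C a⁻¹ * C a : MvPolynomial (Fin 3) k) = 1 := by
    rw [← C_mul, inv_mul_cancel₀ ha, C_1]
  have H := HsymmAux.S_three e x (fun i => by simp [x]) m
  have x0 : x 0 = X 0 := by simp [x]
  have x1 : x 1 = X 1 := by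
    simp [x]
  have x2 : x 2 = X 2 := by
    simp only [x, Fin.val_two, show 2 < 3 by norm_num, dif_pos]
    rfl
  rw [x0, x1, x2] at H
  refine HsymmAux.no_factor m hm _ (ψ (P 0)) (-C a⁻¹ * (ψ (P (Fin.succ 0)) *
    ψ (∏ i : Fin r, P i.succ.succ))) ?_ (hc 0) ?_ H
  · linear_combination (-HsymmAux.S (e + 3) x m) * hinv - C a⁻¹ * e1
  · rw [map_mul, map_mul, hc]; simp
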